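/- One has σ = (−1)^{ℓ(r−1)/2} · (λ·C_1)² · (λ·C_2)² ⋯ (λ·C_ℓ)², where the product is over all 1 ≤ t ≤ ℓ. -/

import Mathlib

lemma aux_sum {r : ℕ} [Fact (Nat.Prime r)] {𝔽 : Type*} [Field 𝔽] {θ : 𝔽}
    (hθ : IsPrimitiveRoot θ r) (a b : ZMod r) :
    ∑ x : ZMod r, θ ^ (a * x).val * θ ^ (x * b).val = if a = -b then (r : 𝔽) else 0 := by
  have h := AddChar.sum_mulShift (a + b) (AddChar.zmodChar_primitive_of_primitive_root r hθ)
  have e : ∀ x : ZMod r, θ ^ (a * x).val * θ ^ (x * b).val =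
      AddChar.zmodChar r ((IsPrimitiveRoot.iff_def θ r).mp hθ).left (x * (a + b)) := by
    intro x
    rw [mul_add, AddChar.map_add_eq_mul, AddChar.zmodChar_apply, AddChar.zmodChar_apply,
      mul_comm a x]
  rw [Finset.sum_congr rfl (fun x _ => e x), h, ZMod.card]
  simp only [eq_neg_iff_add_eq_zero]
  split_ifs <;> simp

lemma aux_sign {r : ℕ} [Fact (Nat.Prime r)] (hr : Odd r) :
    Equiv.Perm.sign (Equiv.neg (ZMod r)) = (-1) ^ ((r - 1) / 2) := by
  have h2 : (Equiv.neg (ZMod r) : Equiv.Perm (ZMod r)) ^ 2 = 1 := by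
    ext x
    simp [pow_two]
  rw [Equiv.Perm.sign_of_pow_two_eq_one h2, ZMod.card]
  have : Fintype.card (Function.fixedPoints (Equiv.neg (ZMod r))) = 1 := by
    rw [Fintype.card_eq_one_iff]
    refine ⟨⟨0, by simp [Function.fixedPoints, Function.IsFixedPt]⟩, ?_⟩
    rintro ⟨y, hy⟩
    have hy' : -y = y := hy
    exact Subtype.ext ((ZMod.neg_eq_self_iff y).1 hy' |>.resolve_right
      (fun h => by
        rcases hr with ⟨k, hk⟩
        omega))
  rw [this]

lemma aux_det {r : ℕ} [Fact (Nat.Prime r)] (hr : Odd r) {𝔽 : Type*} [Field 𝔽] {θ : 𝔽}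
    (hθ : IsPrimitiveRoot θ r) (Cb : Matrix (ZMod r) (ZMod r) 𝔽)
    (hCb : ∀ i j : ZMod r, Cb i j = θ ^ (i * j).val) :
    Cb.det ^ 2 = (r : 𝔽) ^ r * (-1) ^ ((r - 1) / 2) := by
  have h : Cb * Cb = (r : 𝔽) • (Equiv.Perm.permMatrix 𝔽 (Equiv.neg (ZMod r))) := by
    ext i j
    rw [Matrix.mul_apply]
    simp only [hCb]
    rw [aux_sum hθ]
    simp [PEquiv.toMatrix_apply, Equiv.toPEquiv_apply, neg_eq_iff_eq_neg]
  rw [pow_two, ← Matrix.det_mul, h, Matrix.det_smul, Matrix.det_permutation, aux_sign hr, ZMod.card]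
  simp

lemma aux_lam {r : ℕ} [Fact (Nat.Prime r)] (hr : Odd r) {𝔽 : Type*} [Field 𝔽] {θ : 𝔽}
    (hθ : IsPrimitiveRoot θ r) (Cb : Matrix (ZMod r) (ZMod r) 𝔽)
    (hCb : ∀ i j : ZMod r, Cb i j = θ ^ (i * j).val)
    (lam : 𝔽) (hlam : lam = (-(r : 𝔽)) ^ ((r - 1) / 2) * Cb.det⁻¹) :
    (-1) ^ ((r - 1) / 2) * (lam ^ 2 * r) = 1 := by
  have hr0 : (r : 𝔽) ≠ 0 := hθ.neZero'.out
  have hd := aux_det hr hθ Cb hCb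
  rw [hlam, mul_pow, inv_pow, hd]
  obtain ⟨k, hk⟩ := hr
  have h1 : (r - 1) / 2 = k := by omega
  have h2 : (r : 𝔽) ^ r = (r : 𝔽) ^ k * r ^ k * r := by
    rw [← pow_add, ← pow_succ]; congr 1; omega
  rw [h1, h2, neg_pow]
  have h3 : ((-1 : 𝔽) ^ k) * (-1) ^ k = 1 := by
    rw [← mul_pow]; simp
  have h4 : ((-1 : 𝔽) ^ k) ≠ 0 := by simp
  field_simp
  linear_combination (r : 𝔽) ^ (2 * k) * h3

lemma aux_sq {r : ℕ} [Fact (Nat.Prime r)] {𝔽 : Type*} [Field 𝔽] {θ : 𝔽}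
    (hθ : IsPrimitiveRoot θ r) {ℓ : ℕ}
    (C : Fin ℓ → Matrix (Fin ℓ → ZMod r) (Fin ℓ → ZMod r) 𝔽)
    (hC : ∀ t η ξ, C t η ξ =
      if ∀ i, i ≠ t → η i = ξ i then θ ^ (η t * ξ t).val else 0) (t) (η ξ) :
    (C t ^ 2) η ξ = if ξ = Function.update η t (-η t) then (r : 𝔽) else 0 := by
  rw [pow_two, Matrix.mul_apply]
  rw [← Fintype.sum_of_injective (fun x : ZMod r => Function.update η t x)
    (Function.update_injective η t)
    (fun x => C t η (Function.update η t x) * C t (Function.update η t x) ξ) _ ?_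
    (fun _ => rfl)]
  · have h1 : ∀ x, C t η (Function.update η t x) = θ ^ (η t * x).val := by
      intro x
      rw [hC, if_pos]
      · simp
      · intro i hi
        simp [hi]
    have h2 : ∀ x, C t (Function.update η t x) ξ =
        if ∀ i, i ≠ t → η i = ξ i then θ ^ (x * ξ t).val else 0 := by
      intro x
      rw [hC]
      have : (∀ i, i ≠ t → Function.update η t x i = ξ i) ↔ (∀ i, i ≠ t → η i = ξ i) := by
        refine forall_congr' fun i => forall_congr' fun hi => ?_
        simp [hi]
      simp only [this, Function.update_self]
    simp only [h1, h2]
    by_cases h : ∀ i, i ≠ t → η i = ξ i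
    · simp only [if_pos h]
      rw [aux_sum hθ]
      congr 1
      rw [Function.eq_update_iff, eq_iff_iff]
      constructor
      · intro h'
        exact ⟨by rw [h', neg_neg], fun i hi => (h i hi).symm⟩
      · intro h'
        rw [h'.1, neg_neg]
    · simp only [if_neg h]
      rw [if_neg]
      · simp
      · rintro rfl
        exact h fun i hi => by simp [hi]
  · intro κ hκ
    rw [hC, if_neg, zero_mul]
    intro h
    exact hκ ⟨κ t, by
      ext i
      by_cases hi : i = t
      · subst hi; simp
      · simp [hi, h i hi]⟩

lemma aux_prod {r : ℕ} [Fact (Nat.Prime r)] {𝔽 : Type*} [Field 𝔽] {θ : 𝔽}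
    (hθ : IsPrimitiveRoot θ r) {ℓ : ℕ} (lam : 𝔽)
    (C : Fin ℓ → Matrix (Fin ℓ → ZMod r) (Fin ℓ → ZMod r) 𝔽)
    (hC : ∀ t η ξ, C t η ξ =
      if ∀ i, i ≠ t → η i = ξ i then θ ^ (η t * ξ t).val else 0)
    (l : List (Fin ℓ)) (hl : l.Nodup) (η ξ) :
    (l.map fun t => (lam • C t) ^ 2).prod η ξ =
      if ∀ i, η i = (if i ∈ l then -ξ i else ξ i) then (lam ^ 2 * r) ^ l.length else 0 := by
  induction l generalizing η with
  | nil => simp [Matrix.one_apply, funext_iff]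
  | cons t l ih =>
    rw [List.nodup_cons] at hl
    rw [List.map_cons, List.prod_cons, Matrix.mul_apply]
    simp only [smul_pow, Matrix.smul_apply, aux_sq hθ C hC]
    rw [Finset.sum_eq_single (Function.update η t (-η t))]
    · have := ih hl.2 (Function.update η t (-η t))
      simp only [smul_pow] at this
      rw [this]
      have e : (∀ i, Function.update η t (-η t) i = if i ∈ l then -ξ i else ξ i) ↔
          (∀ i, η i = if i ∈ t :: l then -ξ i else ξ i) := by
        refine forall_congr' fun i => ?_
        by_cases hi : i = t
        · subst hi
          simp [hl.1, neg_eq_iff_eq_neg]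
        · simp [hi]
      simp only [e, List.length_cons, pow_succ']
      simp
    · intro κ _ hκ
      simp [hκ]
    · simp

/-- `σ = (−1)^{ℓ(r−1)/2}·(λC_1)²⋯(λC_ℓ)²`. -/
theorem weil_sigma_eq_prod
    {r : ℕ} [Fact (Nat.Prime r)] (hr : Odd r)
    {𝔽 : Type*} [Field 𝔽] {θ : 𝔽} (hθ : IsPrimitiveRoot θ r)
    {ℓ : ℕ} (hℓ : 1 ≤ ℓ)
    (Cb : Matrix (ZMod r) (ZMod r) 𝔽)
    (hCb : ∀ i j : ZMod r, Cb i j = θ ^ (i * j).val)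
    (lam : 𝔽) (hlam : lam = (-(r : 𝔽)) ^ ((r - 1) / 2) * Cb.det⁻¹)
    (C : Fin ℓ → Matrix (Fin ℓ → ZMod r) (Fin ℓ → ZMod r) 𝔽)
    (hC : ∀ t η ξ, C t η ξ =
      if ∀ i, i ≠ t → η i = ξ i then θ ^ (η t * ξ t).val else 0)
    (σ : Matrix (Fin ℓ → ZMod r) (Fin ℓ → ZMod r) 𝔽)
    (hσ : ∀ η ξ, σ η ξ = if η = -ξ then 1 else 0) :
    σ = ((-1 : 𝔽) ^ (ℓ * ((r - 1) / 2))) •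
      ((List.finRange ℓ).map fun t => (lam • C t) ^ 2).prod := by
  ext η ξ
  rw [hσ, Matrix.smul_apply, aux_prod hθ lam C hC _ (List.nodup_finRange ℓ)]
  have h := aux_lam hr hθ Cb hCb lam hlam
  simp only [List.mem_finRange, if_true, List.length_finRange, funext_iff, Pi.neg_apply,
    smul_eq_mul, mul_ite, mul_zero]
  rw [mul_comm ℓ, pow_mul, ← mul_pow, h, one_pow]
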